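/- Let f be an indefinite ternary anisotropic quadratic form over ℚ. Then there exist infinitely many positive rational numbers and infinitely many negative rational numbers that are not represented by f over ℚ. -/

import Mathlib

open Matrix

def Iso (K : Type*) [Field K] (a b : K) : Prop :=
  ∃ x y z : K, (x ≠ 0 ∨ y ≠ 0 ∨ z ≠ 0) ∧ x ^ 2 = a * y ^ 2 + b * z ^ 2

lemma Iso.symm {K : Type*} [Field K] {a b : K} (h : Iso K a b) : Iso K b a := by
  obtain ⟨x, y, z, h0, h⟩ := h
  exact ⟨x, z, y, by tauto, by rw [h]; ring⟩

lemma Iso.scale {K : Type*} [Field K] {a b m : K} (hm : m ≠ 0) (h : Iso K a (b * m ^ 2)) :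
    Iso K a b := by
  obtain ⟨x, y, z, h0, h⟩ := h
  refine ⟨x, y, m * z, ?_, by rw [h]; ring⟩
  rcases h0 with h0 | h0 | h0
  · exact Or.inl h0
  · exact Or.inr (Or.inl h0)
  · exact Or.inr (Or.inr (mul_ne_zero hm h0))

lemma Iso.unscale {K : Type*} [Field K] {a b m : K} (hm : m ≠ 0) (h : Iso K a b) :
    Iso K a (b * m ^ 2) := by
  apply Iso.scale (m := m⁻¹) (inv_ne_zero hm)
  have : b * m ^ 2 * m⁻¹ ^ 2 = b := by field_simp
  rwa [this]

lemma Iso.descent {K : Type*} [Field K] {a b c t : K} (hb : b ≠ 0) (hc : c ≠ 0)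
    (ht : t ^ 2 - a = b * c) (h : Iso K a b) : Iso K a c := by
  obtain ⟨x, y, z, h0, h⟩ := h
  refine ⟨x * t + a * y, x + t * y, b * z, ?_, ?_⟩
  · by_contra hcon
    push Not at hcon
    obtain ⟨h1, h2, h3⟩ := hcon
    have hz : z = 0 := by simpa [hb] using h3
    have hx : x = - (t * y) := by linear_combination h2
    have hy : (b * c) * y = 0 := by
      rw [hx] at h1
      rw [← ht]; linear_combination -h1
    have hy : y = 0 := by simpa [hb, hc] using hy
    simp [hz, hy] at h0 hx
    exact h0 hx
  · have ha : a = t ^ 2 - b * c := by linear_combination -ht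
    have : x ^ 2 - a * y ^ 2 = b * z ^ 2 := by rw [h]; ring
    linear_combination (t ^ 2 - a) * this + b * z ^ 2 * ht

lemma Iso.of_norm {K : Type*} [Field K] {A B x y z s : K} (hs : s ≠ 0)
    (h : x ^ 2 - A * y ^ 2 - B * z ^ 2 + A * B * s ^ 2 = 0) : Iso K A B := by
  by_cases hw : z ^ 2 - A * s ^ 2 = 0
  · exact ⟨z, s, 0, by tauto, by linear_combination hw⟩
  · exact ⟨x * z + A * y * s, x * s + y * z, z ^ 2 - A * s ^ 2, by tauto,
      by linear_combination (z ^ 2 - A * s ^ 2) * h⟩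

lemma sq_mod_squarefree (a : ℤ) (n : ℕ) : Squarefree n →
    (∀ p : ℕ, p.Prime → p ∣ n → ∃ t : ℤ, (p : ℤ) ∣ t ^ 2 - a) →
    ∃ t : ℤ, (n : ℤ) ∣ t ^ 2 - a := by
  induction n using induction_on_primes with
  | zero => intro h; simp at h
  | one => intro _ _; exact ⟨0, by simp⟩
  | prime_mul p m hp ih =>
    intro hsq H
    obtain ⟨hcop, -, hm⟩ := Nat.squarefree_mul_iff.1 hsq
    obtain ⟨t2, h2⟩ := ih hm (fun q hq hqm => H q hq (hqm.mul_left p))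
    obtain ⟨t1, h1⟩ := H p hp (dvd_mul_right _ _)
    have hc : IsCoprime (p : ℤ) (m : ℤ) := Nat.isCoprime_iff_coprime.2 hcop
    obtain ⟨u, v, huv⟩ := hc
    refine ⟨t2 * (u * p) + t1 * (v * m), ?_⟩
    push_cast
    apply IsCoprime.mul_dvd (Nat.isCoprime_iff_coprime.2 hcop)
    · set t := t2 * (u * p) + t1 * (v * m) with ht
      have e : t ^ 2 - a = (p : ℤ) * ((t2 - t1) * u * (t + t1)) + (t1 ^ 2 - a) := by
        have : t - t1 = p * ((t2 - t1) * u) := by rw [ht]; linear_combination t1 * huv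
        linear_combination (t + t1) * this
      rw [e]; exact dvd_add (dvd_mul_right _ _) h1
    · set t := t2 * (u * p) + t1 * (v * m) with ht
      have e : t ^ 2 - a = (m : ℤ) * ((t1 - t2) * v * (t + t2)) + (t2 ^ 2 - a) := by
        have : t - t2 = m * ((t1 - t2) * v) := by rw [ht]; linear_combination t2 * huv
        linear_combination (t + t2) * this
      rw [e]; exact dvd_add (dvd_mul_right _ _) h2

lemma exists_primitive (p : ℕ) [Fact p.Prime] (a b : ℤ) (h : Iso ℚ_[p] a b) :
    ∃ x y z : ℤ_[p], (x = 1 ∨ y = 1 ∨ z = 1) ∧ x ^ 2 = a * y ^ 2 + b * z ^ 2 := by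
  obtain ⟨x, y, z, h0, h⟩ := h
  have key : ∀ m : ℚ_[p], ‖x‖ ≤ ‖m‖ → ‖y‖ ≤ ‖m‖ → ‖z‖ ≤ ‖m‖ → (x = m ∨ y = m ∨ z = m) →
      ∃ x y z : ℤ_[p], (x = 1 ∨ y = 1 ∨ z = 1) ∧ x ^ 2 = a * y ^ 2 + b * z ^ 2 := by
    intro m hx hy hz hor
    have hm : m ≠ 0 := by
      rintro rfl
      rw [norm_zero] at hx hy hz
      rcases h0 with h0 | h0 | h0
      · exact h0 (norm_le_zero_iff.1 hx)
      · exact h0 (norm_le_zero_iff.1 hy)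
      · exact h0 (norm_le_zero_iff.1 hz)
    have hm' : 0 < ‖m‖ := norm_pos_iff.2 hm
    refine ⟨⟨x / m, by rw [norm_div]; exact (div_le_one hm').2 hx⟩,
      ⟨y / m, by rw [norm_div]; exact (div_le_one hm').2 hy⟩,
      ⟨z / m, by rw [norm_div]; exact (div_le_one hm').2 hz⟩, ?_, ?_⟩
    · rcases hor with rfl | rfl | rfl
      · left; exact Subtype.ext (by simp [hm])
      · right; left; exact Subtype.ext (by simp [hm])
      · right; right; exact Subtype.ext (by simp [hm])
    · apply Subtype.ext
      change (x / m) ^ 2 = (((a : ℤ_[p]) : ℚ_[p])) * (y / m) ^ 2 + ((b : ℤ_[p]) : ℚ_[p]) * (z / m) ^ 2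
      rw [PadicInt.coe_intCast, PadicInt.coe_intCast, div_pow, h]
      ring
  rcases le_total ‖x‖ ‖y‖ with h1 | h1 <;> rcases le_total ‖y‖ ‖z‖ with h2 | h2 <;>
    rcases le_total ‖x‖ ‖z‖ with h3 | h3
  all_goals first
    | exact key x le_rfl (by linarith) (by linarith) (by simp)
    | exact key y (by linarith) le_rfl (by linarith) (by simp)
    | exact key z (by linarith) (by linarith) le_rfl (by simp)

lemma local_sq (p : ℕ) [hp : Fact p.Prime] (a b : ℤ) (hb : Squarefree b) (hpb : (p : ℤ) ∣ b)
    (h : Iso ℚ_[p] a b) : ∃ t : ℤ, (p : ℤ) ∣ t ^ 2 - a := by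
  obtain ⟨x, y, z, h0, h⟩ := exists_primitive p a b h
  obtain ⟨c, rfl⟩ := hpb
  have hpp : Prime (p : ℤ_[p]) := PadicInt.prime_p
  have hc : ¬ (p : ℤ_[p]) ∣ (c : ℤ_[p]) := by
    intro hd
    rw [← PadicInt.norm_lt_one_iff_dvd, PadicInt.norm_int_lt_one_iff_dvd] at hd
    have h2 : (p : ℤ) * p ∣ p * c := mul_dvd_mul_left _ hd
    have := hb _ h2
    exact (Nat.prime_iff_prime_int.1 hp.out).not_isUnit this
  push_cast at h
  by_cases hy : (p : ℤ_[p]) ∣ y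
  · exfalso
    have hx : (p : ℤ_[p]) ∣ x := by
      apply hpp.dvd_of_dvd_pow (n := 2)
      rw [h]
      exact dvd_add (dvd_mul_of_dvd_right (dvd_pow hy two_ne_zero) _)
        (dvd_mul_of_dvd_left (dvd_mul_right _ _) _)
    have hz : (p : ℤ_[p]) ∣ z := by
      obtain ⟨x', rfl⟩ := hx
      obtain ⟨y', rfl⟩ := hy
      have e : (c : ℤ_[p]) * z ^ 2 = p * (x' ^ 2 - a * y' ^ 2) := by
        apply mul_left_cancel₀ hpp.ne_zero
        linear_combination -h
      have : (p : ℤ_[p]) ∣ c * z ^ 2 := e ▸ dvd_mul_right _ _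
      exact hpp.dvd_of_dvd_pow ((hpp.dvd_or_dvd this).resolve_left hc)
    rcases h0 with rfl | rfl | rfl
    · exact hpp.not_isUnit (isUnit_of_dvd_one hx)
    · exact hpp.not_isUnit (isUnit_of_dvd_one hy)
    · exact hpp.not_isUnit (isUnit_of_dvd_one hz)
  · have hy' : PadicInt.toZMod y ≠ 0 := by
      intro hk
      rw [← RingHom.mem_ker, PadicInt.ker_toZMod, PadicInt.maximalIdeal_eq_span_p,
        Ideal.mem_span_singleton] at hk
      exact hy hk
    have e := congrArg (PadicInt.toZMod (p := p)) h
    simp only [map_pow, map_add, map_mul, map_intCast, map_natCast, CharP.cast_eq_zero,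
      zero_mul, add_zero] at e
    obtain ⟨t, ht⟩ := ZMod.intCast_surjective (PadicInt.toZMod x / PadicInt.toZMod y)
    refine ⟨t, ?_⟩
    rw [← ZMod.intCast_zmod_eq_zero_iff_dvd]
    push_cast
    rw [ht, div_pow, e]
    field_simp
    ring

lemma int_sqf (b : ℤ) (hb : b ≠ 0) : ∃ c m : ℤ, Squarefree c ∧ m ≠ 0 ∧ c * m ^ 2 = b := by
  obtain ⟨c, m, h, hc⟩ := Nat.sq_mul_squarefree b.natAbs
  have hm : m ≠ 0 := by
    rintro rfl
    simp at h; omega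
  rcases Int.natAbs_eq b with e | e
  · refine ⟨c, m, Int.squarefree_natCast.2 hc, by exact_mod_cast hm, ?_⟩
    rw [e, ← h]; push_cast; ring
  · refine ⟨-c, m, by rw [← Int.squarefree_natAbs]; simpa using hc, by exact_mod_cast hm, ?_⟩
    rw [e, ← h]; push_cast; ring

lemma Iso.of_one {K : Type*} [Field K] (a : K) : Iso K a 1 :=
  ⟨1, 0, 1, by simp, by simp⟩

lemma legendre (n : ℕ) : ∀ a b : ℤ, a.natAbs + b.natAbs ≤ n → Squarefree a → Squarefree b →
    (∀ (p : ℕ) [Fact p.Prime], Iso ℚ_[p] a b) → Iso ℝ a b → Iso ℚ a b := by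
  induction n with
  | zero =>
    intro a b h ha
    have : a = 0 := by omega
    subst this
    simp at ha
  | succ n ih =>
    -- the case a.natAbs ≤ b.natAbs
    have main : ∀ a b : ℤ, a.natAbs ≤ b.natAbs → a.natAbs + b.natAbs ≤ n + 1 → Squarefree a →
        Squarefree b →
        (∀ (p : ℕ) [Fact p.Prime], Iso ℚ_[p] a b) → Iso ℝ a b → Iso ℚ a b := by
      intro a b hab hn ha hb hloc hreal
      have ha0 : a ≠ 0 := ha.ne_zero
      have hb0 : b ≠ 0 := hb.ne_zero
      by_cases hb1 : b.natAbs = 1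
      · have ha1 : a = 1 ∨ a = -1 := by omega
        have hb1 : b = 1 ∨ b = -1 := by omega
        rcases hb1 with rfl | rfl
        · simpa using Iso.of_one (a : ℚ)
        rcases ha1 with rfl | rfl
        · simpa using (Iso.of_one ((-1 : ℤ) : ℚ)).symm
        exfalso
        obtain ⟨x, y, z, h0, h⟩ := hreal
        push_cast at h
        have hx : x = 0 := by nlinarith [sq_nonneg x, sq_nonneg y, sq_nonneg z]
        have hy : y = 0 := by nlinarith [sq_nonneg x, sq_nonneg y, sq_nonneg z]
        have hz : z = 0 := by nlinarith [sq_nonneg x, sq_nonneg y, sq_nonneg z]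
        simp_all
      obtain ⟨t0, ht0⟩ := sq_mod_squarefree a b.natAbs (Int.squarefree_natAbs.2 hb) (by
        intro p hp hpb
        have : Fact p.Prime := ⟨hp⟩
        exact local_sq p a b hb (Int.natCast_dvd.2 hpb) (hloc p))
      have hbpos : 0 < b.natAbs := by omega
      set t := t0.bmod b.natAbs with htdef
      have ht : (b.natAbs : ℤ) ∣ t ^ 2 - a := by
        have h1 : (b.natAbs : ℤ) ∣ t - t0 := Int.dvd_bmod_sub_self
        have : t ^ 2 - a = (t - t0) * (t + t0) + (t0 ^ 2 - a) := by ring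
        rw [this]
        exact dvd_add (dvd_mul_of_dvd_left h1 _) ht0
      have hlt := Int.bmod_lt (x := t0) hbpos
      have hle := Int.le_bmod (x := t0) hbpos
      rw [← htdef] at hlt hle
      obtain ⟨c, hc⟩ := Int.natAbs_dvd.1 ht
      by_cases hc0 : c = 0
      · refine ⟨t, 1, 0, by simp, ?_⟩
        rw [hc0] at hc
        have : t ^ 2 = a := by linarith
        rw [← this]; push_cast; ring
      have hclt : c.natAbs < b.natAbs := by
        have h2 : 2 * |t| ≤ |b| := by
          rw [← Int.natCast_natAbs b]
          rcases abs_cases t with ⟨h, _⟩ | ⟨h, _⟩ <;> rw [h] <;> omega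
        have h3 : |b| * |c| ≤ |t| ^ 2 + |a| := by
          rw [← abs_mul, ← hc, ← abs_pow]
          exact abs_sub _ _
        have h4 : |a| ≤ |b| := by
          rw [← Int.natCast_natAbs b, ← Int.natCast_natAbs a]; exact_mod_cast hab
        have h5 : 2 ≤ |b| := by
          rw [← Int.natCast_natAbs b]; omega
        have h6 : |c| < |b| := by
          by_contra hcon
          push Not at hcon
          nlinarith [abs_nonneg t]
        rw [← Int.natCast_natAbs b, ← Int.natCast_natAbs c] at h6
        exact_mod_cast h6
      obtain ⟨d, m, hd, hm, hdm⟩ := int_sqf c hc0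
      have hdle : d.natAbs ≤ c.natAbs := by
        apply Nat.le_of_dvd (by omega)
        exact Int.natAbs_dvd_natAbs.2 ⟨m ^ 2, hdm.symm⟩
      have trans : ∀ (K : Type) [Field K] [CharZero K], Iso K a b → Iso K a d := by
        intro K _ _ hK
        have h1 : Iso K a (c : K) := by
          apply Iso.descent (t := (t : K)) (Int.cast_ne_zero.2 hb0) (Int.cast_ne_zero.2 hc0) _ hK
          exact_mod_cast hc
        rw [← hdm] at h1
        push_cast at h1
        exact h1.scale (Int.cast_ne_zero.2 hm)
      have hQ : Iso ℚ a d := ih a d (by omega) ha hd (fun p _ => trans _ (hloc p)) (trans _ hreal)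
      have h1 : Iso ℚ a c := by
        rw [← hdm]
        push_cast
        exact hQ.unscale (Int.cast_ne_zero.2 hm)
      apply Iso.descent (t := (t : ℚ)) (Int.cast_ne_zero.2 hc0) (Int.cast_ne_zero.2 hb0) _ h1
      rw [mul_comm]
      exact_mod_cast hc
    intro a b hn ha hb hloc hreal
    rcases le_total a.natAbs b.natAbs with h | h
    · exact main a b h hn ha hb hloc hreal
    · exact (main b a h (by omega) hb ha (fun p _ => (hloc p).symm) hreal.symm).symm

lemma rat_sqf (q : ℚ) (hq : q ≠ 0) : ∃ (c : ℤ) (m : ℚ), Squarefree c ∧ m ≠ 0 ∧ c * m ^ 2 = q := by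
  obtain ⟨c, m, hc, hm, h⟩ := int_sqf (q.num * q.den) (by simp [hq])
  refine ⟨c, m / q.den, hc, by simp [hm], ?_⟩
  have h' : (c : ℚ) * m ^ 2 = q.num * q.den := by exact_mod_cast h
  have hd : (q.den : ℚ) ≠ 0 := by simp
  rw [div_pow, ← mul_div_assoc, h']
  conv_rhs => rw [← Rat.num_div_den q]
  field_simp

lemma hasse (A B : ℚ) (hA : A ≠ 0) (hB : B ≠ 0) (hR : Iso ℝ (A : ℝ) (B : ℝ)) (hQ : ¬ Iso ℚ A B) :
    ∃ (p : ℕ) (_ : Fact p.Prime), ¬ Iso ℚ_[p] (A : ℚ_[p]) (B : ℚ_[p]) := by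
  by_contra hcon
  push Not at hcon
  apply hQ
  obtain ⟨a, m, ha, hm, h1⟩ := rat_sqf A hA
  obtain ⟨b, k, hb, hk, h2⟩ := rat_sqf B hB
  have trans : ∀ (K : Type) [Field K] [CharZero K], Iso K (A : K) (B : K) → Iso K a b := by
    intro K _ _ hK
    rw [← h1, ← h2] at hK
    push_cast at hK
    exact ((hK.scale (Rat.cast_ne_zero.2 hk)).symm.scale (Rat.cast_ne_zero.2 hm)).symm
  have := legendre _ a b le_rfl ha hb (fun p hp => trans _ (hcon p hp)) (trans _ hR)
  rw [← h1, ← h2]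
  exact ((this.unscale hk).symm.unscale hm).symm

lemma padic_sq (p : ℕ) [hp : Fact p.Prime] (k : ℤ) :
    ∃ s : ℚ_[p], s ≠ 0 ∧ s ^ 2 = 1 + (p : ℚ_[p]) ^ 3 * k := by
  have hp2 : (2 : ℝ) ≤ p := by exact_mod_cast hp.out.two_le
  have hnorm : ‖(p : ℤ_[p]) ^ 3 * k‖ ≤ ((p : ℝ) ^ 3)⁻¹ := by
    rw [norm_mul, PadicInt.norm_p_pow]
    have : ‖(k : ℤ_[p])‖ ≤ 1 := PadicInt.norm_le_one _
    calc _ ≤ (p : ℝ) ^ (-(3 : ℕ) : ℤ) * 1 := by gcongr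
      _ = _ := by rw [mul_one, _root_.zpow_neg]; norm_cast
  have h2 : ((p : ℝ))⁻¹ ≤ ‖(2 : ℤ_[p])‖ := by
    by_cases h : p = 2
    · subst h
      have := PadicInt.norm_p (p := 2)
      push_cast at this
      rw [this]; simp
    · have : ‖(2 : ℤ_[p])‖ = 1 := by
        apply le_antisymm (PadicInt.norm_le_one _)
        by_contra hlt
        push Not at hlt
        have := (PadicInt.norm_int_lt_one_iff_dvd (p := p) 2).1 (by exact_mod_cast hlt)
        have : p ∣ 2 := by exact_mod_cast this
        exact h ((Nat.prime_dvd_prime_iff_eq hp.out Nat.prime_two).1 this)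
      rw [this]
      exact inv_le_one_of_one_le₀ (by linarith)
  have hlt : ((p : ℝ) ^ 3)⁻¹ < ‖(2 : ℤ_[p])‖ ^ 2 := by
    calc ((p : ℝ) ^ 3)⁻¹ < ((p : ℝ)⁻¹) ^ 2 := by
          rw [inv_pow]
          apply inv_strictAnti₀ (by positivity)
          nlinarith [sq_nonneg (p : ℝ)]
      _ ≤ _ := by gcongr
  obtain ⟨s, hs, -⟩ := hensels_lemma (p := p) (R := ℤ_[p])
    (F := Polynomial.X ^ 2 - Polynomial.C (1 + (p : ℤ_[p]) ^ 3 * k)) (a := 1) (by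
      have e1 : (Polynomial.aeval (1 : ℤ_[p])) (Polynomial.X ^ 2 -
        Polynomial.C (1 + (p : ℤ_[p]) ^ 3 * k)) = -((p : ℤ_[p]) ^ 3 * k) := by
        simp
      have e2 : (Polynomial.aeval (1 : ℤ_[p])) (Polynomial.derivative (Polynomial.X ^ 2 -
        Polynomial.C (1 + (p : ℤ_[p]) ^ 3 * k))) = 2 := by
        rw [Polynomial.derivative_sub, Polynomial.derivative_C]
        simp [one_add_one_eq_two]
      rw [e1, e2, norm_neg]
      exact lt_of_le_of_lt hnorm hlt)
  have hs' : s ^ 2 = 1 + (p : ℤ_[p]) ^ 3 * k := by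
    simp at hs
    linear_combination hs
  have hs2 : (s : ℚ_[p]) ^ 2 = 1 + (p : ℚ_[p]) ^ 3 * k := by
    exact_mod_cast congrArg (fun u : ℤ_[p] => (u : ℚ_[p])) hs'
  refine ⟨s, ?_, hs2⟩
  intro h0
  rw [h0] at hs2
  have h3 : (1 + (p : ℤ) ^ 3 * k) = 0 := by
    have : ((1 + (p : ℤ) ^ 3 * k : ℤ) : ℚ_[p]) = 0 := by push_cast; rw [← hs2]; simp
    exact_mod_cast this
  have : (p : ℤ) ∣ 1 := ⟨- (p ^ 2 * k), by linear_combination h3⟩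
  exact (Nat.prime_iff_prime_int.1 hp.out).not_isUnit (isUnit_of_dvd_one this)

lemma diag_case (a b c : ℚ) (ha : a ≠ 0) (hb : b ≠ 0) (hc : c ≠ 0)
    (hpos : 0 < a ∨ 0 < b ∨ 0 < c) (hneg : a < 0 ∨ b < 0 ∨ c < 0)
    (haniso : ∀ x y z : ℚ, a * x ^ 2 + b * y ^ 2 + c * z ^ 2 = 0 → x = 0 ∧ y = 0 ∧ z = 0) :
    ∃ p : ℕ, 0 < p ∧ ∀ (k : ℤ) (x y z : ℚ),
      a * x ^ 2 + b * y ^ 2 + c * z ^ 2 ≠ -(a * b * c) * (1 + (p : ℚ) ^ 3 * k) := by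
  have hQ : ¬ Iso ℚ (-(a * b)) (-(a * c)) := by
    rintro ⟨x, y, z, h0, h⟩
    obtain ⟨h1, h2, h3⟩ := haniso (x / a) y z (by field_simp; linear_combination h)
    have hx : x = 0 := (div_eq_zero_iff.1 h1).resolve_right ha
    rcases h0 with h0 | h0 | h0
    · exact h0 hx
    · exact h0 h2
    · exact h0 h3
  have hR1 : ∀ A B : ℝ, 0 < A → Iso ℝ A B := fun A B hA =>
    ⟨√A, 1, 0, by simp, by rw [Real.sq_sqrt hA.le]; ring⟩
  have hR : Iso ℝ ((-(a * b) : ℚ) : ℝ) ((-(a * c) : ℚ) : ℝ) := by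
    by_cases h1 : 0 < -(a * b)
    · exact hR1 _ _ (by exact_mod_cast h1)
    by_cases h2 : 0 < -(a * c)
    · exact (hR1 _ _ (by exact_mod_cast h2)).symm
    exfalso
    push Not at h1 h2
    have h1' : 0 < a * b := lt_of_le_of_ne (by linarith) (mul_ne_zero ha hb).symm
    have h2' : 0 < a * c := lt_of_le_of_ne (by linarith) (mul_ne_zero ha hc).symm
    rcases pos_and_pos_or_neg_and_neg_of_mul_pos h1' with ⟨h3, h4⟩ | ⟨h3, h4⟩ <;>
    rcases pos_and_pos_or_neg_and_neg_of_mul_pos h2' with ⟨h5, h6⟩ | ⟨h5, h6⟩ <;>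
    rcases hpos with h | h | h <;> rcases hneg with h' | h' | h' <;> linarith
  obtain ⟨p, hp, hiso⟩ := hasse _ _ (neg_ne_zero.2 (mul_ne_zero ha hb))
    (neg_ne_zero.2 (mul_ne_zero ha hc)) hR hQ
  refine ⟨p, hp.out.pos, fun k x y z h => hiso ?_⟩
  obtain ⟨s, hs0, hs⟩ := padic_sq p k
  have h' : (a : ℚ_[p]) * x ^ 2 + b * y ^ 2 + c * z ^ 2 = -(a * b * c) * (1 + (p : ℚ_[p]) ^ 3 * k) := by
    exact_mod_cast congrArg (fun u : ℚ => (u : ℚ_[p])) h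
  apply Iso.of_norm (x := (a : ℚ_[p]) * x) (y := y) (z := z) hs0
  rw [← hs] at h'
  push_cast
  linear_combination (a : ℚ_[p]) * h'

lemma exists_diag (F : Matrix (Fin 3) (Fin 3) ℚ) :
    ∃ (w : Fin 3 → ℚ) (e : (Fin 3 → ℚ) ≃ₗ[ℚ] (Fin 3 → ℚ)), ∀ v,
      v ⬝ᵥ F.mulVec v = w 0 * (e v 0) ^ 2 + w 1 * (e v 1) ^ 2 + w 2 * (e v 2) ^ 2 := by
  obtain ⟨w, ⟨e⟩⟩ := QuadraticForm.equivalent_weightedSumSquares (F.toQuadraticForm')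
  have hr : Module.finrank ℚ (Fin 3 → ℚ) = 3 := by simp
  revert w
  rw [hr]
  intro w e
  refine ⟨w, e.toLinearEquiv, fun v => ?_⟩
  have h := e.map_app v
  rw [QuadraticMap.weightedSumSquares_apply, Fin.sum_univ_three] at h
  have h2 : F.toQuadraticForm' v = v ⬝ᵥ F.mulVec v := by
    simp [Matrix.toQuadraticForm', Matrix.toLinearMap₂'_apply']
  rw [← h2, ← h]
  simp only [smul_eq_mul]
  change w 0 * (e v 0 * e v 0) + w 1 * (e v 1 * e v 1) + w 2 * (e v 2 * e v 2) =
    w 0 * (e v 0) ^ 2 + w 1 * (e v 1) ^ 2 + w 2 * (e v 2) ^ 2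
  ring

lemma exists_rat (F : Matrix (Fin 3) (Fin 3) ℚ) (U : Set ℝ) (hU : IsOpen U)
    (h : ∃ v : Fin 3 → ℝ, v ⬝ᵥ (F.map (Rat.cast : ℚ → ℝ)).mulVec v ∈ U) :
    ∃ v : Fin 3 → ℚ, ((v ⬝ᵥ F.mulVec v : ℚ) : ℝ) ∈ U := by
  have hd : DenseRange (Pi.map (fun (_ : Fin 3) => (Rat.cast : ℚ → ℝ))) :=
    DenseRange.piMap (fun _ => Rat.denseRange_cast)
  have hcont : Continuous (fun v : Fin 3 → ℝ => v ⬝ᵥ (F.map (Rat.cast : ℚ → ℝ)).mulVec v) := by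
    simp only [dotProduct, mulVec]
    fun_prop
  obtain ⟨v, hv⟩ := hd.exists_mem_open (hU.preimage hcont) h
  refine ⟨v, ?_⟩
  have : ((v ⬝ᵥ F.mulVec v : ℚ) : ℝ) = (Pi.map (fun (_ : Fin 3) => (Rat.cast : ℚ → ℝ)) v) ⬝ᵥ
    (F.map (Rat.cast : ℚ → ℝ)).mulVec (Pi.map (fun (_ : Fin 3) => (Rat.cast : ℚ → ℝ)) v) := by
    simp [dotProduct, mulVec]
  rw [this]
  exact hv

theorem infinitely_many_nonrepresented
    (F : Matrix (Fin 3) (Fin 3) ℚ) (hF : F.IsSymm) (hFdet : F.det ≠ 0)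
    (hindef : (∃ v : Fin 3 → ℝ, 0 < v ⬝ᵥ (F.map (Rat.cast : ℚ → ℝ)).mulVec v) ∧
      (∃ v : Fin 3 → ℝ, v ⬝ᵥ (F.map (Rat.cast : ℚ → ℝ)).mulVec v < 0))
    (haniso : ∀ v : Fin 3 → ℚ, v ⬝ᵥ F.mulVec v = 0 → v = 0) :
    {q : ℚ | 0 < q ∧ ¬ ∃ v : Fin 3 → ℚ, v ⬝ᵥ F.mulVec v = q}.Infinite ∧
    {q : ℚ | q < 0 ∧ ¬ ∃ v : Fin 3 → ℚ, v ⬝ᵥ F.mulVec v = q}.Infinite := by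
  obtain ⟨w, e, he⟩ := exists_diag F
  have han : ∀ x y z : ℚ, w 0 * x ^ 2 + w 1 * y ^ 2 + w 2 * z ^ 2 = 0 → x = 0 ∧ y = 0 ∧ z = 0 := by
    intro x y z h
    have h1 := haniso (e.symm ![x, y, z]) (by rw [he]; simpa using h)
    have h2 : ![x, y, z] = 0 := by simpa using h1
    exact ⟨by simpa using congrFun h2 0, by simpa using congrFun h2 1, by simpa using congrFun h2 2⟩
  have ha : w 0 ≠ 0 := fun h => by simpa using han 1 0 0 (by simp [h])
  have hb : w 1 ≠ 0 := fun h => by simpa using han 0 1 0 (by simp [h])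
  have hc : w 2 ≠ 0 := fun h => by simpa using han 0 0 1 (by simp [h])
  have hpos : 0 < w 0 ∨ 0 < w 1 ∨ 0 < w 2 := by
    obtain ⟨v, hv⟩ := exists_rat F (Set.Ioi 0) isOpen_Ioi hindef.1
    have hv : 0 < v ⬝ᵥ F.mulVec v := by
      rw [Set.mem_Ioi] at hv; exact_mod_cast hv
    rw [he] at hv
    by_contra hcon
    push Not at hcon
    nlinarith [mul_nonneg (neg_nonneg.2 hcon.1) (sq_nonneg (e v 0)),
      mul_nonneg (neg_nonneg.2 hcon.2.1) (sq_nonneg (e v 1)),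
      mul_nonneg (neg_nonneg.2 hcon.2.2) (sq_nonneg (e v 2))]
  have hneg : w 0 < 0 ∨ w 1 < 0 ∨ w 2 < 0 := by
    obtain ⟨v, hv⟩ := exists_rat F (Set.Iio 0) isOpen_Iio hindef.2
    have hv : v ⬝ᵥ F.mulVec v < 0 := by
      rw [Set.mem_Iio] at hv; exact_mod_cast hv
    rw [he] at hv
    by_contra hcon
    push Not at hcon
    nlinarith [mul_nonneg hcon.1 (sq_nonneg (e v 0)),
      mul_nonneg hcon.2.1 (sq_nonneg (e v 1)),
      mul_nonneg hcon.2.2 (sq_nonneg (e v 2))]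
  obtain ⟨p, hp, H⟩ := diag_case (w 0) (w 1) (w 2) ha hb hc hpos hneg han
  set d := -(w 0 * w 1 * w 2) with hd
  have hd0 : d ≠ 0 := neg_ne_zero.2 (mul_ne_zero (mul_ne_zero ha hb) hc)
  have hP : (1 : ℚ) ≤ (p : ℚ) ^ 3 := one_le_pow₀ (by exact_mod_cast hp)
  have hrep : ∀ k : ℤ, ¬ ∃ v : Fin 3 → ℚ, v ⬝ᵥ F.mulVec v = d * (1 + (p : ℚ) ^ 3 * k) := by
    rintro k ⟨v, hv⟩
    rw [he] at hv
    exact H k _ _ _ hv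
  have hinj : ∀ ε : ℤ, ε ≠ 0 → Function.Injective
      (fun n : ℕ => d * (1 + (p : ℚ) ^ 3 * ((ε * (n + 2) : ℤ) : ℚ))) := by
    intro ε hε m n hmn
    have hε' : (ε : ℚ) ≠ 0 := by exact_mod_cast hε
    have hP0 : (p : ℚ) ^ 3 ≠ 0 := by positivity
    have h1 := mul_left_cancel₀ hd0 hmn
    have h2 := mul_left_cancel₀ hP0 (add_left_cancel h1)
    push_cast at h2
    have h3 := mul_left_cancel₀ hε' h2
    exact_mod_cast add_right_cancel h3
  have hposk : ∀ n : ℕ, 0 < 1 + (p : ℚ) ^ 3 * ((1 * (n + 2) : ℤ) : ℚ) := by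
    intro n; push_cast; positivity
  have hnegk : ∀ n : ℕ, 1 + (p : ℚ) ^ 3 * ((-1 * (n + 2) : ℤ) : ℚ) < 0 := by
    intro n; push_cast
    have : (0 : ℚ) ≤ n := Nat.cast_nonneg n
    nlinarith
  rcases lt_or_gt_of_ne hd0 with hlt | hgt
  · exact ⟨Set.infinite_of_injective_forall_mem (hinj (-1) (by norm_num))
      (fun n => ⟨mul_pos_of_neg_of_neg hlt (hnegk n), hrep _⟩),
      Set.infinite_of_injective_forall_mem (hinj 1 (by norm_num))
      (fun n => ⟨mul_neg_of_neg_of_pos hlt (hposk n), hrep _⟩)⟩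
  · exact ⟨Set.infinite_of_injective_forall_mem (hinj 1 (by norm_num))
      (fun n => ⟨mul_pos hgt (hposk n), hrep _⟩),
      Set.infinite_of_injective_forall_mem (hinj (-1) (by norm_num))
      (fun n => ⟨mul_neg_of_pos_of_neg hgt (hnegk n), hrep _⟩)⟩
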